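/- arXiv:2109.13721 — 4 statements merged into one kernel-verified Lean document; each statement's English description precedes it below -/
import Mathlib

section
/- Let (M,d) be a metric space and let f, g : M → ℝ be two real-valued functions such that |∇f|(x) > |∇g|(x) for every x ∈ M \ Crit(f). Then for every x ∈ M \ Crit(f) there exists z ∈ M such that f(x) − g(x) > f(z) − g(z) and f(x) > f(z). -/
open Filter Topology
open scoped ENNReal Classical

/-- The metric slope of `f : M → ℝ` at `x`: it is `0` if `x` is an isolated point of `M`,
and otherwise `limsup_{y → x, y ≠ x} (f x - f y)⁺ / d(x,y)`, with values in `[0, +∞]`. -/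
noncomputable def metricSlope {M : Type*} [MetricSpace M] (f : M → ℝ) (x : M) : ℝ≥0∞ :=
  if 𝓝[≠] x = ⊥ then 0
  else Filter.limsup (fun y => ENNReal.ofReal (max (f x - f y) 0 / dist x y)) (𝓝[≠] x)

section Slope

variable {M : Type*} [MetricSpace M]

theorem metricSlope_eq_limsup (f : M → ℝ) (x : M) :
    metricSlope f x =
      limsup (fun y => ENNReal.ofReal (max (f x - f y) 0 / dist x y)) (𝓝[≠] x) := by
  unfold metricSlope
  split_ifs with h_isolated
  · rw [h_isolated, limsup_bot, bot_eq_zero]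
  · rfl

theorem metricSlope_le_of_eventually_sub_le {f g : M → ℝ} {x : M}
    (h : ∀ᶠ y in 𝓝[≠] x, f x - f y ≤ max (g x - g y) 0) :
    metricSlope f x ≤ metricSlope g x := by
  rw [metricSlope_eq_limsup, metricSlope_eq_limsup]
  refine limsup_le_limsup (h.mono fun y hy => ?_)
  have h_pos_part : max (f x - f y) 0 ≤ max (g x - g y) 0 := max_le hy (le_max_right _ _)
  dsimp only
  gcongr

theorem key_lemma_general {f g : M → ℝ} {x : M} (h : metricSlope g x < metricSlope f x) :
    ∃ᶠ z in 𝓝[≠] x, f x - g x > f z - g z ∧ f x > f z := by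
  contrapose! h
  refine metricSlope_le_of_eventually_sub_le (h.mono fun z hz => ?_)
  rcases lt_or_ge (f z - g z) (f x - g x) with h_sub | h_sub
  · exact le_max_of_le_right (sub_nonpos.mpr (hz h_sub))
  · exact le_max_of_le_left (by linarith)

end Slope

/-- Key lemma: if `|∇f| > |∇g|` off the critical set of `f`, then from every non-critical
point `x` of `f` there is `z` with `(f-g)(x) > (f-g)(z)` and `f(x) > f(z)`. -/
theorem key_lemma {M : Type*} [MetricSpace M] (f g : M → ℝ)
    (h : ∀ x : M, metricSlope f x ≠ 0 → metricSlope g x < metricSlope f x) :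
    ∀ x : M, metricSlope f x ≠ 0 →
      ∃ z : M, f x - g x > f z - g z ∧ f x > f z :=
  fun x hx => (key_lemma_general (h x hx)).exists
end

section
/- Let (M,d) be a metric space, τ a topology on M, and f, g : M → ℝ two τ-continuous and τ-coercive functions. Assume (i) |∇g|(x) ≤ |∇f|(x) < +∞ for all x ∈ M, and (ii) there exists c ∈ ℝ such that g(x) − f(x) ≤ c for all x ∈ Crit(f). Then g(x) ≤ f(x) + c for all x ∈ M. -/
open Filter Topology
open scoped ENNReal Classical

/-- `f` is `τ`-coercive: the sublevel set `[f ≤ α]` is `τ`-compact for every `α < sup f`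
(the condition `α < sup_{x ∈ M} f x`, with the supremum in the extended reals, is
expressed as `∃ y, α < f y`). -/
def IsSublevelCoercive {M : Type*} (τ : TopologicalSpace M) (f : M → ℝ) : Prop :=
  ∀ α : ℝ, (∃ y, α < f y) → @IsCompact M τ {x | f x ≤ α}

/-!
For `0 ≤ r < 1` the slope of `r * g` is strictly below that of `f` off `Crit f`. From a noncritical
point one can then decrease `f` while increasing `r * g - f`, so a maximum point of `r * g - f` on a
compact sublevel set of `f` is critical for `f`. Hence every `x` admits a critical point `z` with
`r * g x - f x ≤ r * g z - f z = r * (g z - f z) - (1 - r) * f z ≤ r * c - (1 - r) * inf f`.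
Since `f` is bounded below, letting `r → 1` gives `g x - f x ≤ c`.
-/

theorem le_of_forall_mul_le_of_nonneg_of_lt_one {𝕜 : Type*} [Field 𝕜] [LinearOrder 𝕜]
    [IsStrictOrderedRing 𝕜] {a b : 𝕜} (h : ∀ r, 0 ≤ r → r < 1 → r * a ≤ b) : a ≤ b := by
  have hb : 0 ≤ b := by simpa using h 0 le_rfl one_pos
  refine le_of_forall_lt_imp_le_of_dense fun s hs ↦ ?_
  rcases le_or_gt s 0 with hs0 | hs0
  · exact hs0.trans hb
  · have ha : 0 < a := hs0.trans hs
    simpa [ha.ne'] using h (s / a) (by positivity) ((div_lt_one ha).2 hs)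

theorem ofReal_mul_lt_of_le {r : ℝ} (hr : r < 1) {a b : ℝ≥0∞} (ha : a ≠ ⊤) (hb : b ≠ 0)
    (hab : a ≤ b) : ENNReal.ofReal r * a < b := by
  rcases eq_or_ne a 0 with rfl | ha0
  · simpa using hb.bot_lt
  · calc ENNReal.ofReal r * a < 1 * a :=
          ENNReal.mul_lt_mul_left ha0 ha (ENNReal.ofReal_lt_one.2 hr)
      _ ≤ b := by rwa [one_mul]

section Coercive

variable {X : Type*} [τ : TopologicalSpace X] {f u : X → ℝ}

theorem IsSublevelCoercive.bddBelow_range (hf : IsSublevelCoercive τ f)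
    (hf_lsc : LowerSemicontinuous f) : BddBelow (Set.range f) := by
  by_cases hex : ∃ x y, f x < f y
  · obtain ⟨x, hx⟩ := hex
    obtain ⟨m, hm⟩ := (hf_lsc.lowerSemicontinuousOn _).bddBelow_of_isCompact (hf (f x) hx)
    refine ⟨min m (f x), Set.forall_mem_range.2 fun y ↦ ?_⟩
    rcases le_total (f y) (f x) with hy | hy
    · exact min_le_of_left_le (hm (Set.mem_image_of_mem f hy))
    · exact min_le_of_right_le hy
  · push Not at hex
    rcases isEmpty_or_nonempty X with _ | ⟨⟨x⟩⟩
    · simp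
    · exact ⟨f x, Set.forall_mem_range.2 fun y ↦ hex y x⟩

theorem IsSublevelCoercive.exists_isMaxOn_sub (hf : IsSublevelCoercive τ f)
    (hf_lsc : LowerSemicontinuous f) (hu_usc : UpperSemicontinuous u)
    {x : X} (hx : ∃ y, f x < f y) :
    ∃ z ∈ {y | f y ≤ f x}, IsMaxOn (fun y ↦ u y - f y) {y | f y ≤ f x} z := by
  have hneg : UpperSemicontinuous fun y ↦ -f y :=
    continuous_neg.comp_lowerSemicontinuous_antitone hf_lsc fun _ _ ↦ neg_le_neg
  have hsub : UpperSemicontinuous fun y ↦ u y - f y := by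
    simpa only [sub_eq_add_neg] using hu_usc.add hneg
  exact (hsub.upperSemicontinuousOn _).exists_isMaxOn ⟨x, le_refl (f x)⟩ (hf (f x) hx)

end Coercive

section Slope

variable {M : Type*} [MetricSpace M] {f u : M → ℝ} {x : M}

theorem metricSlope_le_metricSlope
    (h : ∀ᶠ y in 𝓝[≠] x, f y < f x → f x - f y ≤ u x - u y) :
    metricSlope f x ≤ metricSlope u x := by
  unfold metricSlope
  split_ifs with hx
  · rfl
  refine limsup_le_limsup (h.mono fun y hy ↦ ?_)
  have hmax : max (f x - f y) 0 ≤ max (u x - u y) 0 := by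
    rcases lt_or_ge (f y) (f x) with hlt | hge
    · exact max_le_max_right 0 (hy hlt)
    · exact max_le (by simp [hge]) (le_max_right _ _)
  exact ENNReal.ofReal_le_ofReal (div_le_div_of_nonneg_right hmax dist_nonneg)

theorem exists_descent_of_metricSlope_lt (h : metricSlope u x < metricSlope f x) :
    ∃ y, f y < f x ∧ u x - f x < u y - f y := by
  contrapose! h
  exact metricSlope_le_metricSlope (.of_forall fun y hy ↦ by linarith [h y hy])

theorem metricSlope_const_mul {r : ℝ} (hr : 0 ≤ r) (f : M → ℝ) (x : M) :
    metricSlope (fun y ↦ r * f y) x = ENNReal.ofReal r * metricSlope f x := by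
  have hquot (y : M) : ENNReal.ofReal (max (r * f x - r * f y) 0 / dist x y) =
      ENNReal.ofReal r * ENNReal.ofReal (max (f x - f y) 0 / dist x y) := by
    rw [← ENNReal.ofReal_mul hr, ← mul_div_assoc, mul_max_of_nonneg _ _ hr, mul_sub, mul_zero]
  unfold metricSlope
  split_ifs with hx
  · rw [mul_zero]
  · simp only [hquot, ENNReal.limsup_const_mul_of_ne_top ENNReal.ofReal_ne_top]

theorem exists_metricSlope_eq_zero_and_sub_le_sub (τ : TopologicalSpace M)
    (hf : IsSublevelCoercive τ f) (hf_lsc : @LowerSemicontinuous M ℝ τ _ f)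
    (hu_usc : @UpperSemicontinuous M ℝ τ _ u)
    (hslope : ∀ y, metricSlope f y ≠ 0 → metricSlope u y < metricSlope f y) (x : M) :
    ∃ z, metricSlope f z = 0 ∧ u x - f x ≤ u z - f z := by
  have of_lt {x : M} (hx : ∃ y, f x < f y) :
      ∃ z, metricSlope f z = 0 ∧ u x - f x ≤ u z - f z := by
    obtain ⟨z, hzx, hmax⟩ := hf.exists_isMaxOn_sub hf_lsc hu_usc hx
    refine ⟨z, ?_, hmax (le_refl (f x))⟩
    by_contra hz
    obtain ⟨y, hyz, hlt⟩ := exists_descent_of_metricSlope_lt (hslope z hz)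
    exact hlt.not_ge (hmax (hyz.le.trans hzx))
  by_cases hx : metricSlope f x = 0
  · exact ⟨x, hx, le_rfl⟩
  -- The sublevel set through a maximum point may fail to be compact, so first descend to `y`.
  · obtain ⟨y, hyx, hlt⟩ := exists_descent_of_metricSlope_lt (hslope x hx)
    obtain ⟨z, hz, hle⟩ := of_lt ⟨x, hyx⟩
    exact ⟨z, hz, hlt.le.trans hle⟩

end Slope

theorem comparison_principle_general {M : Type*} [MetricSpace M]
    (τ : TopologicalSpace M) (f g : M → ℝ)
    (hf_lsc : @LowerSemicontinuous M ℝ τ _ f) (hg_usc : @UpperSemicontinuous M ℝ τ _ g)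
    (hf_coer : IsSublevelCoercive τ f)
    (hle : ∀ x, metricSlope f x ≠ 0 → metricSlope g x ≤ metricSlope f x)
    (hfin : ∀ x, metricSlope f x ≠ 0 → metricSlope g x < ⊤)
    (c : ℝ) (hc : ∀ x, metricSlope f x = 0 → g x - f x ≤ c) (x : M) :
    g x ≤ f x + c := by
  obtain ⟨m, hm⟩ := hf_coer.bddBelow_range hf_lsc
  suffices g x - c - m ≤ f x - m by linarith
  refine le_of_forall_mul_le_of_nonneg_of_lt_one fun r hr0 hr1 ↦ ?_
  have hrg_usc : @UpperSemicontinuous M ℝ τ _ fun y ↦ r * g y :=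
    (continuous_const_mul r).comp_upperSemicontinuous hg_usc (monotone_mul_left_of_nonneg hr0)
  have hslope (y : M) (hy : metricSlope f y ≠ 0) :
      metricSlope (fun y ↦ r * g y) y < metricSlope f y := by
    rw [metricSlope_const_mul hr0]
    exact ofReal_mul_lt_of_le hr1 (hfin y hy).ne hy (hle y hy)
  obtain ⟨z, hz, hxz⟩ :=
    exists_metricSlope_eq_zero_and_sub_le_sub τ hf_coer hf_lsc hrg_usc hslope x
  have hgz : r * (g z - f z) ≤ r * c := mul_le_mul_of_nonneg_left (hc z hz) hr0
  have hfz : (1 - r) * m ≤ (1 - r) * f z :=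
    mul_le_mul_of_nonneg_left (hm (Set.mem_range_self z)) (sub_nonneg.2 hr1.le)
  linarith

/-- Comparison principle: if `|∇g| ≤ |∇f| < +∞` everywhere and `g - f ≤ c` on `Crit f`,
then `g ≤ f + c` everywhere, for τ-continuous τ-coercive `f, g`. -/
theorem comparison_principle {M : Type*} [MetricSpace M]
    (τ : TopologicalSpace M) (f g : M → ℝ)
    (hf_cont : @Continuous M ℝ τ _ f) (hg_cont : @Continuous M ℝ τ _ g)
    (hf_coer : IsSublevelCoercive τ f) (hg_coer : IsSublevelCoercive τ g)
    (h1 : ∀ x : M, metricSlope g x ≤ metricSlope f x)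
    (h2 : ∀ x : M, metricSlope f x < ⊤)
    (c : ℝ) (hc : ∀ x : M, metricSlope f x = 0 → g x - f x ≤ c) :
    ∀ x : M, g x ≤ f x + c := by
  exact comparison_principle_general τ f g hf_cont.lowerSemicontinuous hg_cont.upperSemicontinuous
    hf_coer (fun x _ ↦ h1 x) (fun x _ ↦ (h1 x).trans_lt (h2 x)) c hc
end

section
/- Let X be a reflexive Banach space and let f, g : X → ℝ be two functions that are continuous with respect to the weak topology of X and whose sublevel sets [f ≤ α] (for α < sup f) and [g ≤ α] (for α < sup g) are weakly compact. Assume (i) |∇f|(x) < +∞ for every x ∈ X, (ii) |∇f|(x) = |∇g|(x) for all x ∈ X, and (iii) there exists c ∈ ℝ such that g(x) − f(x) = c for all x ∈ Crit(f). Then g = f + c on all of X. -/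
open Filter Topology
open scoped ENNReal Classical

/-!
Subtracting `a > 1` times `g` breaks the tie between the slopes of `f` and `g`: wherever `g` is not
critical, `|∇f| < a |∇g|`, so one can move to a point where `g` is smaller and `f - a g` is larger.
Hence a maximizer of `f - a g` on a compact sublevel set of `g` is critical for `g`, and there
`f - g` is controlled by assumption. Since `g` is bounded below, letting `a → 1` transfers
the bound on `f - g` from the critical points to every point.
-/

section

open scoped NNReal

lemma lt_mul_of_one_lt_of_le_of_ne_top {a s t : ℝ≥0∞} (ha : 1 < a) (hst : s ≤ t) (hs : s ≠ ⊤)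
    (ht : t ≠ 0) : s < a * t := by
  rcases eq_or_ne t ⊤ with rfl | ht_top
  · rw [ENNReal.mul_top (by positivity)]
    exact hs.lt_top
  · calc s ≤ 1 * t := by rwa [one_mul]
      _ < a * t := by gcongr

lemma upperSemicontinuous_sub_const_mul {W : Type*} [TopologicalSpace W] {u v : W → ℝ}
    (hu : UpperSemicontinuous u) (hv : LowerSemicontinuous v) {a : ℝ} (ha : 0 ≤ a) :
    UpperSemicontinuous fun w => u w - a * v w := by
  have hcont : Continuous fun t : ℝ => -(a * t) := by fun_prop
  have hanti : Antitone fun t : ℝ => -(a * t) := fun s t hst => by dsimp only; gcongr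
  simpa only [sub_eq_add_neg, Function.comp_apply] using
    hu.add (hcont.comp_lowerSemicontinuous_antitone hv hanti)

lemma bddBelow_range_of_isCompact_sublevel {W β : Type*} [TopologicalSpace W] [LinearOrder β]
    {u : W → β} (hu : LowerSemicontinuous u) {v : W} (hv : IsCompact {w | u w ≤ u v}) :
    BddBelow (Set.range u) := by
  obtain ⟨w, hwv, hw⟩ := (hu.lowerSemicontinuousOn _).exists_isMinOn ⟨v, le_refl (u v)⟩ hv
  refine ⟨u w, Set.forall_mem_range.2 fun z => ?_⟩
  rcases le_total (u z) (u v) with hz | hz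
  · exact hw hz
  · exact hwv.trans hz

/- Through `e`, the points of `M` carry an auxiliary topology, used for continuity and compactness,
while slopes refer to the metric; in a Banach space it is the weak topology. -/
variable {M W : Type*} [MetricSpace M] [TopologicalSpace W] {e : W → M} {f g : M → ℝ} {x : M}

lemma eventually_sub_lt_mul_dist_of_metricSlope_lt {r : ℝ≥0} (h : metricSlope f x < r) :
    ∀ᶠ y in 𝓝[≠] x, f x - f y < r * dist x y := by
  by_cases hx : 𝓝[≠] x = ⊥
  · simp only [hx, eventually_bot]
  rw [metricSlope, if_neg hx] at h
  filter_upwards [eventually_lt_of_limsup_lt h, self_mem_nhdsWithin] with y hy hyx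
  have hdist : 0 < dist x y := dist_pos.2 (Ne.symm hyx)
  rw [ENNReal.ofReal_lt_coe_iff (by positivity), div_lt_iff₀ hdist] at hy
  exact (le_max_left _ _).trans_lt hy

lemma frequently_mul_dist_lt_sub_of_lt_metricSlope {r : ℝ≥0} (h : r < metricSlope f x) :
    ∃ᶠ y in 𝓝[≠] x, r * dist x y < f x - f y := by
  have hx : 𝓝[≠] x ≠ ⊥ := by
    intro hx
    simp only [metricSlope, hx, if_true, not_lt_zero] at h
  rw [metricSlope, if_neg hx] at h
  refine ((frequently_lt_of_lt_limsup (by isBoundedDefault) h).and_eventually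
    self_mem_nhdsWithin).mono fun y ⟨hy, hyx⟩ => ?_
  have hdist : 0 < dist x y := dist_pos.2 (Ne.symm hyx)
  rw [ENNReal.coe_lt_ofReal, lt_div_iff₀ hdist] at hy
  exact (lt_max_iff.1 hy).resolve_right (by positivity : (0 : ℝ) ≤ r * dist x y).not_gt

lemma exists_lt_and_sub_mul_lt_of_metricSlope_lt {a : ℝ≥0}
    (h : metricSlope f x < a * metricSlope g x) :
    ∃ y, g y < g x ∧ f x - a * g x < f y - a * g y := by
  obtain ⟨r, hfr, hrg⟩ := ENNReal.lt_iff_exists_nnreal_btwn.1 h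
  have ha : a ≠ 0 := by
    rintro rfl
    simp only [ENNReal.coe_zero, zero_mul, not_lt_zero] at h
  have hrg' : ((r / a : ℝ≥0) : ℝ≥0∞) < metricSlope g x := by
    rw [ENNReal.coe_div ha]
    exact ENNReal.div_lt_of_lt_mul' hrg
  obtain ⟨y, hgy, hfy⟩ := ((frequently_mul_dist_lt_sub_of_lt_metricSlope hrg').and_eventually
    (eventually_sub_lt_mul_dist_of_metricSlope_lt hfr)).exists
  have hg_pos : 0 < g x - g y := lt_of_le_of_lt (by positivity) hgy
  have hfg : f x - f y < a * (g x - g y) :=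
    calc f x - f y < r * dist x y := hfy
      _ = a * ((r / a : ℝ≥0) * dist x y) := by push_cast; field_simp
      _ < a * (g x - g y) := by gcongr
  exact ⟨y, by linarith, by linarith⟩

lemma exists_metricSlope_eq_zero_and_sub_mul_le (he : Function.Surjective e) {a : ℝ≥0}
    (hfg : UpperSemicontinuous fun w => f (e w) - a * g (e w))
    (hg_coer : ∀ α : ℝ, (∃ y, α < g y) → IsCompact {w | g (e w) ≤ α})
    (hslope : ∀ y, metricSlope g y ≠ 0 → metricSlope f y < a * metricSlope g y) (x : M) :
    ∃ z, metricSlope g z = 0 ∧ f x - a * g x ≤ f z - a * g z := by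
  by_cases hx : metricSlope g x = 0
  · exact ⟨x, hx, le_rfl⟩
  obtain ⟨y, hyx, hxy⟩ := exists_lt_and_sub_mul_lt_of_metricSlope_lt (hslope x hx)
  obtain ⟨v, rfl⟩ := he y
  obtain ⟨w, hwv, hw⟩ := (hfg.upperSemicontinuousOn _).exists_isMaxOn ⟨v, le_refl (g (e v))⟩
    (hg_coer (g (e v)) ⟨x, hyx⟩)
  refine ⟨e w, ?_, hxy.le.trans (hw (le_refl (g (e v))))⟩
  by_contra hw_slope
  obtain ⟨z, hzw, hwz⟩ := exists_lt_and_sub_mul_lt_of_metricSlope_lt (hslope _ hw_slope)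
  obtain ⟨t, rfl⟩ := he z
  exact (hw (hzw.le.trans hwv)).not_gt hwz

theorem sub_le_of_metricSlope_le (he : Function.Surjective e)
    (hf : UpperSemicontinuous (f ∘ e)) (hg : LowerSemicontinuous (g ∘ e))
    (hg_coer : ∀ α : ℝ, (∃ y, α < g y) → IsCompact {w | g (e w) ≤ α})
    (hf_slope : ∀ y, metricSlope f y ≠ ⊤) (hfg : ∀ y, metricSlope f y ≤ metricSlope g y)
    {k : ℝ} (hk : ∀ y, metricSlope g y = 0 → f y - g y ≤ k) (x : M) : f x - g x ≤ k := by
  by_cases hx : metricSlope g x = 0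
  · exact hk x hx
  have hslope : ∀ a : ℝ≥0, 1 < a → ∀ y, metricSlope g y ≠ 0 →
      metricSlope f y < a * metricSlope g y :=
    fun a ha y => lt_mul_of_one_lt_of_le_of_ne_top (ENNReal.one_lt_coe_iff.2 ha) (hfg y)
      (hf_slope y)
  obtain ⟨m, hm⟩ : ∃ m, ∀ y, m ≤ g y := by
    obtain ⟨y, hyx, -⟩ := exists_lt_and_sub_mul_lt_of_metricSlope_lt (hslope 2 one_lt_two x hx)
    obtain ⟨v, rfl⟩ := he y
    obtain ⟨m, hm⟩ := bddBelow_range_of_isCompact_sublevel hg (hg_coer _ ⟨x, hyx⟩)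
    exact ⟨m, he.forall.2 fun w => hm ⟨w, rfl⟩⟩
  have hbound : ∀ a : ℝ≥0, 1 < a → f x - g x ≤ k + (a - 1) * (g x - m) := by
    intro a ha
    obtain ⟨z, hz, hxz⟩ := exists_metricSlope_eq_zero_and_sub_mul_le he
      (upperSemicontinuous_sub_const_mul hf hg a.coe_nonneg) hg_coer (hslope a ha) x
    have ha' : (0 : ℝ) ≤ a - 1 := sub_nonneg.2 (mod_cast ha.le)
    linarith [hk z hz, mul_le_mul_of_nonneg_left (hm z) ha']
  have hlim : Tendsto (fun a : ℝ≥0 => k + (a - 1) * (g x - m)) (𝓝[>] 1) (𝓝 k) := by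
    refine Tendsto.mono_left ?_ nhdsWithin_le_nhds
    have hcont : Continuous fun a : ℝ≥0 => k + (a - 1) * (g x - m) := by fun_prop
    simpa using hcont.tendsto 1
  exact ge_of_tendsto hlim (eventually_nhdsWithin_of_forall hbound)

end

theorem determination_reflexive_banach_general {M W : Type*} [MetricSpace M] [TopologicalSpace W]
    {e : W → M} (he : Function.Surjective e) (f g : M → ℝ)
    (hf_cont : Continuous fun w => f (e w)) (hg_cont : Continuous fun w => g (e w))
    (hf_coer : ∀ α : ℝ, (∃ y, α < f y) → IsCompact {w | f (e w) ≤ α})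
    (hg_coer : ∀ α : ℝ, (∃ y, α < g y) → IsCompact {w | g (e w) ≤ α})
    (hf_slope : ∀ x, metricSlope f x ≠ ⊤) (hfg : ∀ x, metricSlope f x = metricSlope g x)
    (c : ℝ) (hc : ∀ x, metricSlope f x = 0 → g x - f x = c) :
    ∀ x, g x = f x + c := by
  intro x
  have h_le : f x - g x ≤ -c :=
    sub_le_of_metricSlope_le he hf_cont.upperSemicontinuous hg_cont.lowerSemicontinuous hg_coer
      hf_slope (fun y => (hfg y).le) (fun y hy => by linarith [hc y ((hfg y).trans hy)]) x
  have h_ge : g x - f x ≤ c :=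
    sub_le_of_metricSlope_le he hg_cont.upperSemicontinuous hf_cont.lowerSemicontinuous hf_coer
      (fun y => hfg y ▸ hf_slope y) (fun y => (hfg y).ge) (fun y hy => (hc y hy).le) x
  linarith

/-- Determination theorem in a reflexive Banach space (reflexivity: the canonical inclusion
into the double dual is surjective), for weakly continuous functions with weakly compact
sublevel sets `[f ≤ α]` for `α < sup f` (expressed as `∃ y, α < f y`). -/
theorem determination_reflexive_banach {X : Type*}
    [NormedAddCommGroup X] [NormedSpace ℝ X] [CompleteSpace X]
    (hrefl : Function.Surjective (NormedSpace.inclusionInDoubleDual ℝ X))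
    (f g : X → ℝ)
    (hf_cont : Continuous (fun x : WeakSpace ℝ X => f x))
    (hg_cont : Continuous (fun x : WeakSpace ℝ X => g x))
    (hf_coer : ∀ α : ℝ, (∃ y : X, α < f y) → IsCompact {x : WeakSpace ℝ X | f x ≤ α})
    (hg_coer : ∀ α : ℝ, (∃ y : X, α < g y) → IsCompact {x : WeakSpace ℝ X | g x ≤ α})
    (h1 : ∀ x : X, metricSlope f x ≠ ⊤)
    (h2 : ∀ x : X, metricSlope f x = metricSlope g x)
    (c : ℝ) (hc : ∀ x : X, metricSlope f x = 0 → g x - f x = c) :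
    ∀ x : X, g x = f x + c := by
  have he : Function.Surjective (toWeakSpace ℝ X).symm := (toWeakSpace ℝ X).symm.surjective
  exact determination_reflexive_banach_general he f g hf_cont hg_cont hf_coer hg_coer h1 h2 c hc
end

section
/- Let f : ℝ → ℝ be defined by f(x) = (x + π/2)² − 1 for x < −π/2, f(x) = sin(x) for −π/2 ≤ x ≤ π/2, and f(x) = (x − π/2)² + 1 for x > π/2, and let g(x) = f(−x). Then f and g are continuously differentiable, their sublevel sets [f ≤ α] and [g ≤ α] are compact for every α ∈ ℝ, |∇f|(x) = |∇g|(x) < +∞ for every x ∈ ℝ, and yet there is no constant c ∈ ℝ such that f(x) = g(x) + c for all x ∈ ℝ. -/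
open Filter Topology
open scoped ENNReal Classical

/-- The piecewise function of the square-and-sinus example. -/
noncomputable def sqSin (x : ℝ) : ℝ :=
  if x < -(Real.pi / 2) then (x + Real.pi / 2) ^ 2 - 1
  else if x ≤ Real.pi / 2 then Real.sin x
  else (x - Real.pi / 2) ^ 2 + 1

/-!
At a point of differentiability the metric slope is the norm of the derivative, so it forgets the
sign of the derivative. Here `sqSin` is odd on `[-π/2, π/2]`, whereas `x ↦ sqSin x` and
`x ↦ sqSin (-x)` differ by constants on each of the two outer half-lines. The derivative is thus
even on the middle interval and odd outside it; its absolute value is even everywhere, and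
reflecting `sqSin` preserves all slopes although `sqSin` is not even.
-/

section MetricSpace

variable {M : Type*} [MetricSpace M] {f : M → ℝ} {x : M}

lemma metricSlope_le_of_eventually_sub_le_mul_dist {C : ℝ}
    (h : ∀ᶠ y in 𝓝[≠] x, f x - f y ≤ C * dist x y) : metricSlope f x ≤ ENNReal.ofReal C := by
  unfold metricSlope
  split_ifs with hx
  · exact zero_le
  refine limsup_le_of_le (h := ?_)
  filter_upwards [h, self_mem_nhdsWithin] with y hy hyx
  have hdist : 0 < dist x y := dist_pos.2 (Ne.symm hyx)
  rw [← max_div_div_right hdist.le, zero_div, ENNReal.ofReal_max, ENNReal.ofReal_zero, max_zero]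
  exact ENNReal.ofReal_le_ofReal ((div_le_iff₀ hdist).2 hy)

lemma ofReal_le_metricSlope_of_tendsto {ι : Type*} {l : Filter ι} [l.NeBot] {u : ι → M} {c : ℝ}
    (hu : Tendsto u l (𝓝[≠] x))
    (hc : Tendsto (fun i => (f x - f (u i)) / dist x (u i)) l (𝓝 c)) :
    ENNReal.ofReal c ≤ metricSlope f x := by
  rw [metricSlope, if_neg hu.neBot.ne]
  calc
    ENNReal.ofReal c = limsup (fun i => ENNReal.ofReal ((f x - f (u i)) / dist x (u i))) l :=
      (ENNReal.tendsto_ofReal hc).limsup_eq.symm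
    _ ≤ limsup (fun i => ENNReal.ofReal (max (f x - f (u i)) 0 / dist x (u i))) l := by
      refine limsup_le_limsup (.of_forall fun i => ENNReal.ofReal_le_ofReal ?_)
      gcongr
      exact le_max_left _ _
    _ ≤ limsup (fun y => ENNReal.ofReal (max (f x - f y) 0 / dist x y)) (𝓝[≠] x) :=
      limsSup_le_limsSup_of_le (map_mono hu)

end MetricSpace

section NormedSpace

variable {E : Type*} [NormedAddCommGroup E] [NormedSpace ℝ E] {f : E → ℝ} {f' : E →L[ℝ] ℝ} {x : E}

lemma metricSlope_le_enorm_of_hasFDerivAt (h : HasFDerivAt f f' x) :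
    metricSlope f x ≤ ‖f'‖ₑ := by
  rw [← ofReal_norm]
  refine ge_of_tendsto (x := 𝓝[>] (0 : ℝ)) (f := fun ε => ENNReal.ofReal (‖f'‖ + ε)) ?_ ?_
  · refine ENNReal.tendsto_ofReal (Tendsto.mono_left ?_ nhdsWithin_le_nhds)
    exact Continuous.tendsto' (by fun_prop) _ _ (add_zero _)
  filter_upwards [self_mem_nhdsWithin] with ε hε
  apply metricSlope_le_of_eventually_sub_le_mul_dist
  filter_upwards [nhdsWithin_le_nhds (h.isLittleO.def hε)] with y hy
  have hlin : -f' (y - x) ≤ ‖f'‖ * ‖y - x‖ := (neg_le_abs _).trans (f'.le_opNorm _)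
  have hrem : -(f y - f x - f' (y - x)) ≤ ε * ‖y - x‖ := (neg_le_abs _).trans hy
  rw [dist_comm, dist_eq_norm]
  linarith

lemma ofReal_neg_div_norm_le_metricSlope_of_hasFDerivAt (h : HasFDerivAt f f' x) {v : E}
    (hv : v ≠ 0) : ENNReal.ofReal (-f' v / ‖v‖) ≤ metricSlope f x := by
  have hu : Tendsto (fun t : ℝ => x + t • v) (𝓝[>] 0) (𝓝[≠] x) := by
    refine tendsto_nhdsWithin_iff.2 ⟨Tendsto.mono_left ?_ nhdsWithin_le_nhds, ?_⟩
    · exact Continuous.tendsto' (by fun_prop) _ _ (by simp)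
    · filter_upwards [self_mem_nhdsWithin] with t ht
      simpa [hv] using (ne_of_gt ht : t ≠ 0)
  refine ofReal_le_metricSlope_of_tendsto hu ?_
  have hline := (h.hasLineDerivAt v).tendsto_slope_zero_right
  refine (hline.neg.div_const ‖v‖).congr' ?_
  filter_upwards [self_mem_nhdsWithin] with t (ht : 0 < t)
  rw [dist_self_add_right, norm_smul, Real.norm_of_nonneg ht.le, smul_eq_mul]
  field_simp
  ring

theorem metricSlope_eq_enorm_of_hasFDerivAt (h : HasFDerivAt f f' x) :
    metricSlope f x = ‖f'‖ₑ := by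
  have hle := metricSlope_le_enorm_of_hasFDerivAt h
  refine hle.antisymm ?_
  have hfin : metricSlope f x ≠ ∞ := ne_top_of_le_ne_top enorm_ne_top hle
  have hdescent : ∀ v : E, -f' v ≤ (metricSlope f x).toReal * ‖v‖ := fun v => by
    rcases eq_or_ne v 0 with rfl | hv
    · simp
    rw [← div_le_iff₀ (norm_pos_iff.2 hv)]
    exact (ENNReal.ofReal_le_iff_le_toReal hfin).1
      (ofReal_neg_div_norm_le_metricSlope_of_hasFDerivAt h hv)
  rw [← ofReal_norm, ENNReal.ofReal_le_iff_le_toReal hfin]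
  refine f'.opNorm_le_bound ENNReal.toReal_nonneg fun v => abs_le'.2 ⟨?_, hdescent v⟩
  simpa using hdescent (-v)

end NormedSpace

lemma metricSlope_eq_enorm_of_hasDerivAt {f : ℝ → ℝ} {f' x : ℝ} (h : HasDerivAt f f' x) :
    metricSlope f x = ‖f'‖ₑ := by
  rw [metricSlope_eq_enorm_of_hasFDerivAt h.hasFDerivAt, ← ofReal_norm,
    ContinuousLinearMap.norm_toSpanSingleton, ofReal_norm]

lemma isCompact_sublevel_of_tendsto_cocompact_atTop {X γ : Type*} [TopologicalSpace X]
    [LinearOrder γ] [NoMaxOrder γ] {f : X → γ} (hf : LowerSemicontinuous f)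
    (hlim : Tendsto f (cocompact X) atTop) (α : γ) : IsCompact {x | f x ≤ α} := by
  obtain ⟨K, hK, hKα⟩ := mem_cocompact.1 (hlim.eventually_gt_atTop α)
  refine hK.of_isClosed_subset (hf.isClosed_preimage α) fun x hx => ?_
  by_contra hxK
  exact not_lt_of_ge hx (hKα hxK)

section Gluing

variable {X Y : Type*} [TopologicalSpace X] {p : X → Prop} [DecidablePred p] {f g : X → Y}

lemma eqOn_ite_closure_left (hfg : ∀ x ∈ frontier {x | p x}, f x = g x) :
    Set.EqOn (fun x => if p x then f x else g x) f (closure {x | p x}) := by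
  intro x hx
  by_cases hp : p x
  · exact if_pos hp
  · exact (if_neg hp).trans (hfg x ⟨hx, fun hxi => hp (interior_subset hxi)⟩).symm

lemma eqOn_ite_closure_right (hfg : ∀ x ∈ frontier {x | p x}, f x = g x) :
    Set.EqOn (fun x => if p x then f x else g x) g (closure {x | ¬p x}) := by
  have hgf : ∀ x ∈ frontier {x | ¬p x}, g x = f x := fun x hx =>
    (hfg x (by rwa [← Set.compl_ofPred, frontier_compl] at hx)).symm
  simpa only [ite_not] using eqOn_ite_closure_left hgf

end Gluing

lemma hasDerivAt_ite {𝕜 F : Type*} [NontriviallyNormedField 𝕜] [NormedAddCommGroup F]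
    [NormedSpace 𝕜 F] {p : 𝕜 → Prop} [DecidablePred p] {f g f' g' : 𝕜 → F}
    (hfg : ∀ x ∈ frontier {x | p x}, f x = g x) (hfg' : ∀ x ∈ frontier {x | p x}, f' x = g' x)
    {x : 𝕜} (hf : HasDerivAt f (f' x) x) (hg : HasDerivAt g (g' x) x) :
    HasDerivAt (fun y => if p y then f y else g y) (if p x then f' x else g' x) x := by
  have glue {φ : 𝕜 → F} {φ' : F} {s : Set 𝕜} (hφ : HasDerivAt φ φ' x)
      (heq : Set.EqOn (fun y => if p y then f y else g y) φ (closure s))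
      (heq' : x ∈ closure s → (if p x then f' x else g' x) = φ') :
      HasDerivWithinAt (fun y => if p y then f y else g y) (if p x then f' x else g' x) s x := by
    by_cases hx : x ∈ closure s
    · rw [heq' hx]
      exact hφ.hasDerivWithinAt.congr (heq.mono subset_closure) (heq hx)
    · exact HasFDerivWithinAt.of_notMem_closure hx
  have hp := glue hf (eqOn_ite_closure_left hfg) fun hx => eqOn_ite_closure_left hfg' hx
  have hnp := glue hg (eqOn_ite_closure_right hfg) fun hx => eqOn_ite_closure_right hfg' hx
  refine (hp.union hnp).hasDerivAt ?_
  rw [← Set.compl_ofPred, Set.union_compl_self]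
  exact univ_mem

/-- The derivative of `sqSin`, whose absolute value is the metric slope. It keeps the case split of
`sqSin`; at both breakpoints the adjacent branches take the value `0`. -/
noncomputable def sqSinDeriv (x : ℝ) : ℝ :=
  if x < -(Real.pi / 2) then 2 * (x + Real.pi / 2)
  else if x ≤ Real.pi / 2 then Real.cos x
  else 2 * (x - Real.pi / 2)

lemma hasDerivAt_sqSin (x : ℝ) : HasDerivAt sqSin (sqSinDeriv x) x := by
  have hmid : -(Real.pi / 2) ≤ Real.pi / 2 := neg_le_self (by positivity)
  have hbreak_left : ∀ y ∈ frontier {y | y < -(Real.pi / 2)}, y = -(Real.pi / 2) := fun _ hy =>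
    frontier_lt_subset_eq continuous_id continuous_const hy
  have hbreak_right : ∀ y ∈ frontier {y | y ≤ Real.pi / 2}, y = Real.pi / 2 := fun _ hy =>
    frontier_le_subset_eq continuous_id continuous_const hy
  have hleft : HasDerivAt (fun y : ℝ => (y + Real.pi / 2) ^ 2 - 1) (2 * (x + Real.pi / 2)) x := by
    simpa using (((hasDerivAt_id x).add_const (Real.pi / 2)).pow 2).sub_const 1
  have hright : HasDerivAt (fun y : ℝ => (y - Real.pi / 2) ^ 2 + 1) (2 * (x - Real.pi / 2)) x := by
    simpa using (((hasDerivAt_id x).sub_const (Real.pi / 2)).pow 2).add_const 1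
  refine hasDerivAt_ite (f' := fun y => 2 * (y + Real.pi / 2))
    (g' := fun y => if y ≤ Real.pi / 2 then Real.cos y else 2 * (y - Real.pi / 2)) ?_ ?_ hleft
    (hasDerivAt_ite (g' := fun y => 2 * (y - Real.pi / 2)) ?_ ?_ (Real.hasDerivAt_sin x) hright)
  · exact fun y hy => by simp [hbreak_left y hy, hmid]
  · exact fun y hy => by simp [hbreak_left y hy, hmid]
  · exact fun y hy => by simp [hbreak_right y hy]
  · exact fun y hy => by simp [hbreak_right y hy]

lemma continuous_sqSinDeriv : Continuous sqSinDeriv := by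
  have hmid : -(Real.pi / 2) ≤ Real.pi / 2 := neg_le_self (by positivity)
  refine Continuous.if ?_ (by fun_prop)
    (Continuous.if_le (by fun_prop) (by fun_prop) (by fun_prop) (by fun_prop) ?_)
  · intro x hx
    obtain rfl : x = -(Real.pi / 2) := frontier_lt_subset_eq continuous_id continuous_const hx
    simp [hmid]
  · rintro x rfl
    simp

lemma contDiff_one_sqSin : ContDiff ℝ 1 sqSin := by
  have hderiv : deriv sqSin = sqSinDeriv := funext fun x => (hasDerivAt_sqSin x).deriv
  rw [contDiff_one_iff_deriv, hderiv]
  exact ⟨fun x => (hasDerivAt_sqSin x).differentiableAt, continuous_sqSinDeriv⟩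

lemma abs_sqSinDeriv (x : ℝ) :
    |sqSinDeriv x| = if |x| ≤ Real.pi / 2 then |Real.cos x| else 2 * (|x| - Real.pi / 2) := by
  have hπ := Real.pi_pos
  unfold sqSinDeriv
  split_ifs with hleft habs hright habs habs
  · linarith [neg_le_of_abs_le habs]
  · rw [abs_of_neg (show x < 0 by linarith), abs_of_neg (by linarith)]
    ring
  · rfl
  · exact absurd (abs_le.2 ⟨not_lt.1 hleft, hright⟩) habs
  · exact absurd (le_of_abs_le habs) hright
  · rw [abs_of_pos (show 0 < x by linarith), abs_of_pos (by linarith)]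

lemma enorm_sqSinDeriv_neg (x : ℝ) : ‖sqSinDeriv (-x)‖ₑ = ‖sqSinDeriv x‖ₑ := by
  simp only [Real.enorm_eq_ofReal_abs, abs_sqSinDeriv, abs_neg, Real.cos_neg]

lemma abs_sub_le_sqSin (x : ℝ) : |x| - (Real.pi / 2 + 5 / 4) ≤ sqSin x := by
  have hπ := Real.pi_pos
  unfold sqSin
  split_ifs with hleft hright
  · rw [abs_of_neg (by linarith)]
    linarith [sq_nonneg (x + Real.pi / 2 + 1 / 2)]
  · have hx : |x| ≤ Real.pi / 2 := abs_le.2 ⟨not_lt.1 hleft, hright⟩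
    linarith [Real.neg_one_le_sin x]
  · rw [abs_of_pos (by linarith)]
    linarith [sq_nonneg (x - Real.pi / 2 - 1 / 2)]

lemma tendsto_sqSin_cocompact_atTop : Tendsto sqSin (cocompact ℝ) atTop :=
  tendsto_atTop_mono abs_sub_le_sqSin
    (tendsto_atTop_add_const_right _ _ (tendsto_norm_cocompact_atTop (E := ℝ)))

lemma isCompact_sqSin_sublevel (α : ℝ) : IsCompact {x | sqSin x ≤ α} :=
  isCompact_sublevel_of_tendsto_cocompact_atTop
    contDiff_one_sqSin.continuous.lowerSemicontinuous tendsto_sqSin_cocompact_atTop α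

lemma metricSlope_sqSin (x : ℝ) : metricSlope sqSin x = ‖sqSinDeriv x‖ₑ :=
  metricSlope_eq_enorm_of_hasDerivAt (hasDerivAt_sqSin x)

lemma metricSlope_sqSin_comp_neg (x : ℝ) :
    metricSlope (fun y => sqSin (-y)) x = ‖sqSinDeriv (-x)‖ₑ := by
  rw [← enorm_neg (sqSinDeriv (-x)), ← mul_neg_one]
  exact metricSlope_eq_enorm_of_hasDerivAt ((hasDerivAt_sqSin (-x)).comp x (hasDerivAt_neg x))

lemma sqSin_eq_sin {x : ℝ} (hx : |x| ≤ Real.pi / 2) : sqSin x = Real.sin x := by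
  obtain ⟨hleft, hright⟩ := abs_le.1 hx
  rw [sqSin, if_neg hleft.not_gt, if_pos hright]

/-- `f = sqSin` and `g(x) = f(-x)` are `C¹`, have compact sublevel sets and equal finite
slopes everywhere, yet they do not differ by a constant. -/
theorem sqSin_counterexample :
    ContDiff ℝ 1 sqSin ∧ ContDiff ℝ 1 (fun x : ℝ => sqSin (-x)) ∧
    (∀ α : ℝ, IsCompact {x : ℝ | sqSin x ≤ α}) ∧
    (∀ α : ℝ, IsCompact {x : ℝ | sqSin (-x) ≤ α}) ∧
    (∀ x : ℝ, metricSlope sqSin x = metricSlope (fun y : ℝ => sqSin (-y)) x) ∧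
    (∀ x : ℝ, metricSlope sqSin x ≠ ⊤) ∧
    ¬∃ c : ℝ, ∀ x : ℝ, sqSin x = sqSin (-x) + c := by
  refine ⟨contDiff_one_sqSin, contDiff_one_sqSin.comp contDiff_neg, isCompact_sqSin_sublevel,
    fun α => (isCompact_sqSin_sublevel α).neg, fun x => ?_, fun x => ?_, ?_⟩
  · rw [metricSlope_sqSin, metricSlope_sqSin_comp_neg, enorm_sqSinDeriv_neg]
  · rw [metricSlope_sqSin]
    exact enorm_ne_top
  · rintro ⟨c, hc⟩
    have hzero : c = 0 := by simpa using hc 0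
    have habs : |Real.pi / 2| ≤ Real.pi / 2 := (abs_of_pos (by positivity)).le
    have hsin : Real.sin (Real.pi / 2) = Real.sin (-(Real.pi / 2)) := by
      simpa only [sqSin_eq_sin habs, sqSin_eq_sin ((abs_neg _).trans_le habs), hzero, add_zero]
        using hc (Real.pi / 2)
    norm_num at hsin
end
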